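/- Let Φ̊ ⊂ ℝⁿ be the root system of type BC_n (n ≥ 2), let (Λ_α) be an extension datum of type (Φ̊, Y), and let Φ^re be the associated set of real roots. Then for every nonempty proper subset J ⊊ {1, …, n}, the lift Â_J = {α ⊕ y ∈ Φ^re : α ∈ A_J} is a maximal closed subroot system of Φ^re. -/

import Mathlib

open scoped RealInnerProductSpace Pointwise

noncomputable section

namespace BdS

variable {V Y : Type*} [NormedAddCommGroup V] [InnerProductSpace ℝ V]
variable [AddCommGroup Y] [Module ℝ Y]

/-- `pairing β α = (β, α∨) = 2(β,α)/(α,α)`. -/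
def pairing (β α : V) : ℝ := 2 * ⟪β, α⟫ / ⟪α, α⟫

/-- `reflRoot α v = s_α(v) = v − (v, α∨)α`. -/
def reflRoot (α v : V) : V := v - pairing v α • α

/-- A (finite) root system in `V`. -/
def IsRootSystem (Φ : Set V) : Prop :=
  Φ.Finite ∧ (0 : V) ∉ Φ ∧ Submodule.span ℝ Φ = ⊤ ∧
    (∀ α ∈ Φ, ∀ β ∈ Φ, reflRoot α β ∈ Φ) ∧
    ∀ α ∈ Φ, ∀ β ∈ Φ, ∃ m : ℤ, pairing β α = (m : ℝ)

def IsReduced (Φ : Set V) : Prop :=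
  ∀ α ∈ Φ, ∀ c : ℝ, c • α ∈ Φ → c • α = α ∨ c • α = -α

def IsIrreducible (Φ : Set V) : Prop :=
  ∀ Φ₁ Φ₂ : Set V, Φ = Φ₁ ∪ Φ₂ → (∀ x ∈ Φ₁, ∀ y ∈ Φ₂, ⟪x, y⟫ = 0) →
    Φ₁ = ∅ ∨ Φ₂ = ∅

/-- divisible roots -/
def divSet (Φ : Set V) : Set V := {α ∈ Φ | (2:ℝ)⁻¹ • α ∈ Φ}
/-- non-divisible roots -/
def ndSet (Φ : Set V) : Set V := Φ \ divSet Φ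
/-- short roots: non-divisible roots of non-maximal squared length -/
def shortSet (Φ : Set V) : Set V := {α ∈ ndSet Φ | ∃ β ∈ ndSet Φ, ⟪α, α⟫ < ⟪β, β⟫}
/-- long roots -/
def longSet (Φ : Set V) : Set V := ndSet Φ \ shortSet Φ

/-- An extension datum of type `(Φ, Y)`. -/
def IsExtensionDatum (Φ : Set V) (Λ : V → Set Y) : Prop :=
  (∀ α ∈ Φ, ∀ β ∈ Φ, ∀ z ∈ Λ α, ∀ y ∈ Λ β, y - pairing β α • z ∈ Λ (reflRoot α β)) ∧
  (0 : Y) ∈ Λ 0 ∧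
  (∀ α ∈ ndSet Φ, (0 : Y) ∈ Λ α) ∧
  (∀ α ∈ divSet Φ, (Λ α).Nonempty) ∧
  Submodule.span ℝ (⋃ α ∈ insert (0 : V) Φ, Λ α) = ⊤

/-- subroot system of a finite root system -/
def IsSubRS (Φ Δ : Set V) : Prop :=
  Δ.Nonempty ∧ Δ ⊆ Φ ∧ ∀ α ∈ Δ, ∀ β ∈ Δ, reflRoot α β ∈ Δ

def IsClosedSubRS (Φ Δ : Set V) : Prop :=
  IsSubRS Φ Δ ∧ ∀ α ∈ Δ, ∀ β ∈ Δ, α + β ∈ Φ → α + β ∈ Δ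

def IsMaxClosedSubRS (Φ Δ : Set V) : Prop :=
  IsClosedSubRS Φ Δ ∧ Δ ≠ Φ ∧
    ∀ Δ' : Set V, IsClosedSubRS Φ Δ' → Δ' ≠ Φ → Δ ⊆ Δ' → Δ' = Δ

/-- semi-closed subroot system, relative to given short/long/divisible parts -/
def IsSemiClosedSubRS (Φ Φs Φl Φd Δ : Set V) : Prop :=
  IsSubRS Φ Δ ∧ ¬ (∀ α ∈ Δ, ∀ β ∈ Δ, α + β ∈ Φ → α + β ∈ Δ) ∧
    ∀ α ∈ Δ, ∀ β ∈ Δ, α + β ∈ Φ → α + β ∉ Δ →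
      (α ∈ Φs ∧ β ∈ Φs ∧ α + β ∈ Φl ∪ Φd) ∨ (α ∈ Φl ∧ β ∈ Φl ∧ α + β ∈ Φd)

def IsMaxSemiClosedSubRS (Φ Φs Φl Φd Δ : Set V) : Prop :=
  IsSemiClosedSubRS Φ Φs Φl Φd Δ ∧
    ∀ Δ' : Set V, IsClosedSubRS Φ Δ' → Δ' ≠ Φ → ¬ Δ ⊂ Δ'

/-- the set of real roots attached to an extension datum -/
def PhiRe (Φ : Set V) (Λ : V → Set Y) : Set (V × Y) := {x | x.1 ∈ Φ ∧ x.2 ∈ Λ x.1}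

/-- affine reflection `s_{α ⊕ y}(β ⊕ z) = s_α(β) ⊕ (z − (β,α∨)y)` -/
def reflAff (a x : V × Y) : V × Y := (reflRoot a.1 x.1, x.2 - pairing x.1 a.1 • a.2)

/-- subroot system of a set of real roots `R` -/
def IsSubSys (R Ψ : Set (V × Y)) : Prop :=
  Ψ.Nonempty ∧ Ψ ⊆ R ∧ Ψ ≠ R ∧ ∀ a ∈ Ψ, ∀ x ∈ Ψ, reflAff a x ∈ Ψ

def IsClosedSubSys (R Ψ : Set (V × Y)) : Prop :=
  IsSubSys R Ψ ∧ ∀ x ∈ Ψ, ∀ y ∈ Ψ, x + y ∈ R → x + y ∈ Ψ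

def IsMaxClosedSubSys (R Ψ : Set (V × Y)) : Prop :=
  IsClosedSubSys R Ψ ∧ ∀ Ψ' : Set (V × Y), IsClosedSubSys R Ψ' → Ψ ⊆ Ψ' → Ψ' = Ψ

/-- gradient of a subroot system -/
def Gr (Ψ : Set (V × Y)) : Set V := {α | ∃ y : Y, (α, y) ∈ Ψ}

def Zset (Ψ : Set (V × Y)) (α : V) : Set Y := {y | (α, y) ∈ Ψ}

abbrev E (n : ℕ) := EuclideanSpace ℝ (Fin n)

def eps {n : ℕ} (i : Fin n) : E n := EuclideanSpace.single i 1

def shortBC (n : ℕ) : Set (E n) := {v | ∃ i : Fin n, v = eps i ∨ v = -eps i}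

def longBC (n : ℕ) : Set (E n) :=
  {v | ∃ i j : Fin n, i ≠ j ∧ ∃ c d : ℝ, (c = 1 ∨ c = -1) ∧ (d = 1 ∨ d = -1) ∧
    v = c • eps i + d • eps j}

def divBC (n : ℕ) : Set (E n) :=
  {v | ∃ i : Fin n, v = (2:ℝ) • eps i ∨ v = -((2:ℝ) • eps i)}

def BCn (n : ℕ) : Set (E n) := shortBC n ∪ longBC n ∪ divBC n
def Bn (n : ℕ) : Set (E n) := shortBC n ∪ longBC n
def Cn (n : ℕ) : Set (E n) := longBC n ∪ divBC n

/-- the closed subroot system `A_J` of `BC_n`. -/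
def AJ (n : ℕ) (J : Set (Fin n)) : Set (E n) :=
  divBC n ∪ {v | ∃ j ∈ J, v = eps j ∨ v = -eps j} ∪
    {v | ∃ r s : Fin n, r ≠ s ∧ ((r ∈ J ∧ s ∈ J) ∨ (r ∉ J ∧ s ∉ J)) ∧
      ∃ c d : ℝ, (c = 1 ∨ c = -1) ∧ (d = 1 ∨ d = -1) ∧ v = c • eps r + d • eps s}

/-
Let `L_J` be the group of vectors whose coordinates outside `J` have even sum, so that
`A_J = BC_n ∩ L_J`. Pairings of roots are integers, so cutting the real roots down to `L_J`
gives a closed subroot system. For maximality, let `Ψ'` be a closed subroot system containing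
this lift. Since `Ψ'` is closed and stable under negation, it cannot distinguish two real roots
whose difference lies in the lift. For short roots `u ∉ L_J` and `w ∈ L_J` the extension datum
puts every difference `u ⊕ y - (u + w) ⊕ z = -w ⊕ (y - z)` in the lift, so all lifts of `u` and
of `u + w` lie in `Ψ'` or none does; and `v - u` is a root in `L_J` for orthogonal short roots
`u, v ∉ L_J`. Hence the real roots outside the lift belong to `Ψ'` all together or not at all.
-/

lemma reflRoot_eq_reflection (α v : V) : reflRoot α v = (ℝ ∙ α)ᗮ.reflection v := by
  rw [Submodule.reflection_orthogonal_apply, Submodule.reflection_singleton_apply, reflRoot,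
    pairing, real_inner_self_eq_norm_sq, real_inner_comm, mul_div_assoc, mul_smul]
  simp only [RCLike.ofReal_real_eq_id, id_eq, neg_sub, ofNat_smul_eq_nsmul]

lemma reflRoot_self (α : V) : reflRoot α α = -α := by
  rw [reflRoot_eq_reflection, Submodule.reflection_orthogonalComplement_singleton_eq_neg]

lemma reflRoot_add (α v w : V) : reflRoot α (v + w) = reflRoot α v + reflRoot α w := by
  simp only [reflRoot_eq_reflection, map_add]

lemma reflRoot_smul (α : V) (c : ℝ) (v : V) : reflRoot α (c • v) = c • reflRoot α v := by
  simp only [reflRoot_eq_reflection, map_smul]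

lemma reflRoot_neg (α v : V) : reflRoot α (-v) = -reflRoot α v := by
  simp only [reflRoot_eq_reflection, map_neg]

lemma inner_reflRoot_reflRoot (α v w : V) : ⟪reflRoot α v, reflRoot α w⟫ = ⟪v, w⟫ := by
  simp only [reflRoot_eq_reflection, LinearIsometryEquiv.inner_map_map]

lemma reflRoot_smul_left {c : ℝ} (hc : c ≠ 0) (α v : V) : reflRoot (c • α) v = reflRoot α v := by
  simp only [reflRoot_eq_reflection, Submodule.span_singleton_smul_eq hc.isUnit]

lemma reflRoot_of_inner_eq_zero {α v : V} (h : ⟪v, α⟫ = 0) : reflRoot α v = v := by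
  simp [reflRoot, pairing, h]

lemma pairing_self {α : V} (hα : α ≠ 0) : pairing α α = 2 :=
  mul_div_cancel_right₀ 2 (inner_self_ne_zero.2 hα)

lemma reflAff_self {x : V × Y} (hx : x.1 ≠ 0) : reflAff x x = -x := by
  rw [reflAff, reflRoot_self, pairing_self hx]
  exact Prod.ext rfl (by simp only [Prod.snd_neg]; module)

section ClosedSubSys

variable {R Ψ : Set (V × Y)}

lemma IsClosedSubSys.neg_mem (hΨ : IsClosedSubSys R Ψ) (hR : ∀ x ∈ R, x.1 ≠ 0) {x : V × Y}
    (hx : x ∈ Ψ) : -x ∈ Ψ := by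
  obtain ⟨⟨-, hΨR, -, hrefl⟩, -⟩ := hΨ
  exact reflAff_self (hR x (hΨR hx)) ▸ hrefl x hx x hx

lemma IsClosedSubSys.neg_mem_iff (hΨ : IsClosedSubSys R Ψ) (hR : ∀ x ∈ R, x.1 ≠ 0) {x : V × Y} :
    -x ∈ Ψ ↔ x ∈ Ψ :=
  ⟨fun h => neg_neg x ▸ hΨ.neg_mem hR h, hΨ.neg_mem hR⟩

lemma IsClosedSubSys.mem_iff_of_sub_mem (hΨ : IsClosedSubSys R Ψ) (hR : ∀ x ∈ R, x.1 ≠ 0)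
    {x y : V × Y} (hx : x ∈ R) (hy : y ∈ R) (hxy : x - y ∈ Ψ) : x ∈ Ψ ↔ y ∈ Ψ := by
  have add_mem {a b : V × Y} (ha : a ∈ Ψ) (hb : b ∈ Ψ) (hab : a + b ∈ R) : a + b ∈ Ψ :=
    hΨ.2 a ha b hb hab
  have hyx : y - x ∈ Ψ := neg_sub x y ▸ hΨ.neg_mem hR hxy
  constructor <;> intro h
  · simpa using add_mem hyx h (by simpa)
  · simpa using add_mem hxy h (by simpa)

lemma isMaxClosedSubSys_of_mem_iff (hΨ : IsClosedSubSys R Ψ) (x₀ : V × Y)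
    (h : ∀ Ψ', IsClosedSubSys R Ψ' → Ψ ⊆ Ψ' → ∀ x ∈ R, x ∉ Ψ → (x ∈ Ψ' ↔ x₀ ∈ Ψ')) :
    IsMaxClosedSubSys R Ψ := by
  refine ⟨hΨ, fun Ψ' hΨ' hle => (Set.Subset.antisymm hle fun x hx => ?_).symm⟩
  by_contra hxΨ
  obtain ⟨⟨-, hΨ'R, hne, -⟩, -⟩ := id hΨ'
  have hx₀ : x₀ ∈ Ψ' := (h Ψ' hΨ' hle x (hΨ'R hx) hxΨ).1 hx
  refine hne (Set.Subset.antisymm hΨ'R fun y hy => ?_)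
  by_cases hyΨ : y ∈ Ψ
  exacts [hle hyΨ, (h Ψ' hΨ' hle y hy hyΨ).2 hx₀]

end ClosedSubSys

section ExtensionDatum

variable {Φ : Set V} {Λ : V → Set Y}

lemma IsExtensionDatum.zero_lift_mem (hΛ : IsExtensionDatum Φ Λ) {α : V} (hα : α ∈ ndSet Φ) :
    (α, (0 : Y)) ∈ PhiRe Φ Λ :=
  ⟨hα.1, hΛ.2.2.1 α hα⟩

lemma IsExtensionDatum.sub_mem_of_pairing_eq_one (hΛ : IsExtensionDatum Φ Λ) {α β : V} {y z : Y}
    (h : pairing α β = 1) (hα : (α, y) ∈ PhiRe Φ Λ) (hβ : (β, z) ∈ PhiRe Φ Λ) :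
    y - z ∈ Λ (α - β) := by
  simpa only [reflRoot, h, one_smul] using hΛ.1 β hβ.1 α hα.1 z hβ.2 y hα.2

theorem IsExtensionDatum.isClosedSubSys_inter_addSubgroup (hΛ : IsExtensionDatum Φ Λ)
    (hrefl : ∀ α ∈ Φ, ∀ β ∈ Φ, reflRoot α β ∈ Φ)
    (hint : ∀ α ∈ Φ, ∀ β ∈ Φ, ∃ m : ℤ, pairing β α = m) (L : AddSubgroup V)
    (hL : ∃ α ∈ ndSet Φ, α ∈ L) (hL' : ∃ α ∈ ndSet Φ, α ∉ L) :
    IsClosedSubSys (PhiRe Φ Λ) {x | x ∈ PhiRe Φ Λ ∧ x.1 ∈ L} := by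
  obtain ⟨α, hα, hαL⟩ := hL
  obtain ⟨β, hβ, hβL⟩ := hL'
  refine ⟨⟨⟨(α, 0), hΛ.zero_lift_mem hα, hαL⟩, fun x hx => hx.1, fun h => ?_, ?_⟩, ?_⟩
  · have hβ₀ : (β, (0 : Y)) ∈ PhiRe Φ Λ := hΛ.zero_lift_mem hβ
    rw [← h] at hβ₀
    exact hβL hβ₀.2
  · rintro a ⟨⟨haΦ, haΛ⟩, haL⟩ x ⟨⟨hxΦ, hxΛ⟩, hxL⟩
    refine ⟨⟨hrefl _ haΦ _ hxΦ, hΛ.1 _ haΦ _ hxΦ _ haΛ _ hxΛ⟩, ?_⟩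
    obtain ⟨m, hm⟩ := hint _ haΦ _ hxΦ
    change reflRoot a.1 x.1 ∈ L
    rw [reflRoot, hm, Int.cast_smul_eq_zsmul]
    exact L.sub_mem hxL (L.zsmul_mem haL m)
  · exact fun x hx y hy hxy => ⟨hxy, L.add_mem hx.2 hy.2⟩

end ExtensionDatum

section RootsBC

variable {n : ℕ} {a b u α β : E n}

lemma inner_eps_eps (i j : Fin n) : ⟪(eps i : E n), eps j⟫ = if i = j then 1 else 0 := by
  simp [eps, EuclideanSpace.inner_single_left]

lemma mem_shortBC_iff : α ∈ shortBC n ↔ ∃ i, ∃ c : ℝ, (c = 1 ∨ c = -1) ∧ α = c • eps i := by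
  simp only [shortBC, Set.mem_ofPred_eq, or_and_right, exists_or, exists_eq_left,
    one_smul, neg_smul]

lemma neg_mem_shortBC (ha : a ∈ shortBC n) : -a ∈ shortBC n := by
  obtain ⟨i, rfl | rfl⟩ := ha
  exacts [⟨i, .inr rfl⟩, ⟨i, .inl (neg_neg _)⟩]

lemma inner_self_of_mem_shortBC (ha : a ∈ shortBC n) : ⟪a, a⟫ = 1 := by
  obtain ⟨i, rfl | rfl⟩ := ha <;> simp only [inner_neg_neg, inner_eps_eps, if_true]

lemma eq_or_eq_neg_or_inner_eq_zero (ha : a ∈ shortBC n) (hb : b ∈ shortBC n) :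
    a = b ∨ a = -b ∨ ⟪a, b⟫ = 0 := by
  obtain ⟨i, hi⟩ := ha
  obtain ⟨j, hj⟩ := hb
  by_cases hij : i = j
  · subst hij
    rcases hi with rfl | rfl <;> rcases hj with rfl | rfl <;> simp
  · rcases hi with rfl | rfl <;> rcases hj with rfl | rfl <;> simp [inner_eps_eps, hij]

lemma exists_int_inner_of_mem_shortBC (ha : a ∈ shortBC n) (hb : b ∈ shortBC n) :
    ∃ m : ℤ, ⟪a, b⟫ = m := by
  rcases eq_or_eq_neg_or_inner_eq_zero ha hb with rfl | rfl | h
  · exact ⟨1, by rw [inner_self_of_mem_shortBC ha, Int.cast_one]⟩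
  · exact ⟨-1, by rw [inner_neg_left, inner_self_of_mem_shortBC hb, Int.cast_neg, Int.cast_one]⟩
  · exact ⟨0, by simp [h]⟩

lemma mem_longBC_iff :
    α ∈ longBC n ↔ ∃ a ∈ shortBC n, ∃ b ∈ shortBC n, ⟪a, b⟫ = 0 ∧ α = a + b := by
  constructor
  · rintro ⟨i, j, hij, c, d, hc, hd, rfl⟩
    exact ⟨_, mem_shortBC_iff.2 ⟨i, c, hc, rfl⟩, _, mem_shortBC_iff.2 ⟨j, d, hd, rfl⟩,
      by simp [inner_smul_left, inner_smul_right, inner_eps_eps, hij], rfl⟩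
  · rintro ⟨a, ha, b, hb, hab, rfl⟩
    obtain ⟨i, c, hc, rfl⟩ := mem_shortBC_iff.1 ha
    obtain ⟨j, d, hd, rfl⟩ := mem_shortBC_iff.1 hb
    refine ⟨i, j, ?_, c, d, hc, hd, rfl⟩
    rintro rfl
    rw [real_inner_smul_left, real_inner_smul_right, inner_eps_eps, if_pos rfl] at hab
    rcases hc with rfl | rfl <;> rcases hd with rfl | rfl <;> norm_num at hab

lemma mem_divBC_iff : α ∈ divBC n ↔ ∃ a ∈ shortBC n, α = (2 : ℝ) • a := by
  constructor
  · rintro ⟨i, rfl | rfl⟩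
    exacts [⟨_, ⟨i, .inl rfl⟩, rfl⟩, ⟨_, ⟨i, .inr rfl⟩, (smul_neg _ _).symm⟩]
  · rintro ⟨_, ⟨i, rfl | rfl⟩, rfl⟩
    exacts [⟨i, .inl rfl⟩, ⟨i, .inr (smul_neg _ _)⟩]

lemma mem_BCn_iff :
    α ∈ BCn n ↔ α ∈ shortBC n ∨
      (∃ a ∈ shortBC n, ∃ b ∈ shortBC n, ⟪a, b⟫ = 0 ∧ α = a + b) ∨
      ∃ a ∈ shortBC n, α = (2 : ℝ) • a := by
  rw [BCn, Set.mem_union, Set.mem_union, mem_longBC_iff, mem_divBC_iff, or_assoc]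

lemma add_mem_BCn (ha : a ∈ shortBC n) (hb : b ∈ shortBC n) (hab : ⟪a, b⟫ = 0) :
    a + b ∈ BCn n :=
  mem_BCn_iff.2 (.inr (.inl ⟨a, ha, b, hb, hab, rfl⟩))

lemma exists_int_inner (hα : α ∈ BCn n) (ha : a ∈ shortBC n) : ∃ m : ℤ, ⟪α, a⟫ = m := by
  rcases mem_BCn_iff.1 hα with hα | ⟨b, hb, c, hc, -, rfl⟩ | ⟨b, hb, rfl⟩
  · exact exists_int_inner_of_mem_shortBC hα ha
  · obtain ⟨k, hk⟩ := exists_int_inner_of_mem_shortBC hb ha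
    obtain ⟨l, hl⟩ := exists_int_inner_of_mem_shortBC hc ha
    exact ⟨k + l, by rw [inner_add_left, hk, hl, Int.cast_add]⟩
  · obtain ⟨k, hk⟩ := exists_int_inner_of_mem_shortBC hb ha
    exact ⟨2 * k, by rw [real_inner_smul_left, hk, Int.cast_mul, Int.cast_ofNat]⟩

lemma zero_notMem_BCn : (0 : E n) ∉ BCn n := by
  intro h
  rcases mem_BCn_iff.1 h with h | ⟨a, ha, b, -, hab, h⟩ | ⟨a, ha, h⟩
  · simpa using inner_self_of_mem_shortBC h
  · have : ⟪a, a + b⟫ = 1 := by rw [inner_add_right, hab, inner_self_of_mem_shortBC ha, add_zero]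
    simp [← h] at this
  · have : ⟪a, (2 : ℝ) • a⟫ = 2 := by
      rw [real_inner_smul_right, inner_self_of_mem_shortBC ha, mul_one]
    simp [← h] at this

lemma mem_ndSet_of_inner_eq_one (hα : α ∈ BCn n) (ha : a ∈ shortBC n) (h : ⟪α, a⟫ = 1) :
    α ∈ ndSet (BCn n) := by
  refine ⟨hα, fun hdiv => ?_⟩
  obtain ⟨m, hm⟩ := exists_int_inner hdiv.2 ha
  rw [real_inner_smul_left, h, mul_one] at hm
  have : 2 * m = 1 := by
    have : 2 * (m : ℝ) = 1 := by rw [← hm, mul_inv_cancel₀ two_ne_zero]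
    exact_mod_cast this
  omega

lemma shortBC_subset_ndSet : shortBC n ⊆ ndSet (BCn n) := fun _ ha =>
  mem_ndSet_of_inner_eq_one (.inl (.inl ha)) ha (inner_self_of_mem_shortBC ha)

lemma add_mem_ndSet (ha : a ∈ shortBC n) (hb : b ∈ shortBC n) (hab : ⟪a, b⟫ = 0) :
    a + b ∈ ndSet (BCn n) :=
  mem_ndSet_of_inner_eq_one (add_mem_BCn ha hb hab) hb
    (by rw [inner_add_left, hab, inner_self_of_mem_shortBC hb, zero_add])

lemma pairing_of_mem_shortBC (ha : a ∈ shortBC n) (v : E n) : pairing v a = 2 * ⟪v, a⟫ := by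
  rw [pairing, inner_self_of_mem_shortBC ha, div_one]

lemma pairing_add_of_inner_eq_zero (ha : a ∈ shortBC n) (hb : b ∈ shortBC n) (hab : ⟪a, b⟫ = 0)
    (v : E n) : pairing v (a + b) = ⟪v, a⟫ + ⟪v, b⟫ := by
  rw [pairing, real_inner_add_add_self, hab, inner_self_of_mem_shortBC ha,
    inner_self_of_mem_shortBC hb, inner_add_right]
  ring

lemma pairing_two_smul_of_mem_shortBC (ha : a ∈ shortBC n) (v : E n) :
    pairing v ((2 : ℝ) • a) = ⟪v, a⟫ := by
  rw [pairing, real_inner_smul_left, real_inner_smul_right, real_inner_smul_right,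
    inner_self_of_mem_shortBC ha]
  ring

lemma exists_int_pairing (hα : α ∈ BCn n) (hβ : β ∈ BCn n) : ∃ m : ℤ, pairing β α = m := by
  rcases mem_BCn_iff.1 hα with hα | ⟨a, ha, b, hb, hab, rfl⟩ | ⟨a, ha, rfl⟩
  · obtain ⟨m, hm⟩ := exists_int_inner hβ hα
    exact ⟨2 * m, by rw [pairing_of_mem_shortBC hα, hm, Int.cast_mul, Int.cast_ofNat]⟩
  · obtain ⟨k, hk⟩ := exists_int_inner hβ ha
    obtain ⟨l, hl⟩ := exists_int_inner hβ hb
    exact ⟨k + l, by rw [pairing_add_of_inner_eq_zero ha hb hab, hk, hl, Int.cast_add]⟩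
  · simpa only [pairing_two_smul_of_mem_shortBC ha] using exists_int_inner hβ ha

lemma pairing_add_eq_one (ha : a ∈ shortBC n) (hb : b ∈ shortBC n) (hab : ⟪a, b⟫ = 0) :
    pairing a (a + b) = 1 := by
  rw [pairing_add_of_inner_eq_zero ha hb hab, hab, inner_self_of_mem_shortBC ha, add_zero]

lemma reflRoot_add_self (ha : a ∈ shortBC n) (hb : b ∈ shortBC n) (hab : ⟪a, b⟫ = 0) :
    reflRoot (a + b) a = -b := by
  rw [reflRoot, pairing_add_eq_one ha hb hab, one_smul, sub_add_cancel_left]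

lemma reflRoot_mem_shortBC_of_mem_shortBC (ha : a ∈ shortBC n) (hu : u ∈ shortBC n) :
    reflRoot a u ∈ shortBC n := by
  rcases eq_or_eq_neg_or_inner_eq_zero hu ha with rfl | rfl | h
  · rw [reflRoot_self]; exact neg_mem_shortBC hu
  · rw [reflRoot_neg, reflRoot_self, neg_neg]; exact ha
  · rw [reflRoot_of_inner_eq_zero h]; exact hu

lemma reflRoot_add_mem_shortBC (ha : a ∈ shortBC n) (hb : b ∈ shortBC n) (hab : ⟪a, b⟫ = 0)
    (hu : u ∈ shortBC n) : reflRoot (a + b) u ∈ shortBC n := by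
  have hba : ⟪b, a⟫ = 0 := by rwa [real_inner_comm]
  have reflRoot_b : reflRoot (a + b) b = -a := add_comm b a ▸ reflRoot_add_self hb ha hba
  rcases eq_or_eq_neg_or_inner_eq_zero hu ha with rfl | rfl | hua
  · rw [reflRoot_add_self hu hb hab]; exact neg_mem_shortBC hb
  · rw [reflRoot_neg, reflRoot_add_self ha hb hab, neg_neg]; exact hb
  rcases eq_or_eq_neg_or_inner_eq_zero hu hb with rfl | rfl | hub
  · rw [reflRoot_b]; exact neg_mem_shortBC ha
  · rw [reflRoot_neg, reflRoot_b, neg_neg]; exact ha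
  · rw [reflRoot_of_inner_eq_zero (by rw [inner_add_right, hua, hub, add_zero])]; exact hu

lemma reflRoot_mem_shortBC (hα : α ∈ BCn n) (hu : u ∈ shortBC n) : reflRoot α u ∈ shortBC n := by
  rcases mem_BCn_iff.1 hα with hα | ⟨a, ha, b, hb, hab, rfl⟩ | ⟨a, ha, rfl⟩
  · exact reflRoot_mem_shortBC_of_mem_shortBC hα hu
  · exact reflRoot_add_mem_shortBC ha hb hab hu
  · rw [reflRoot_smul_left two_ne_zero]; exact reflRoot_mem_shortBC_of_mem_shortBC ha hu

lemma reflRoot_mem_BCn (hα : α ∈ BCn n) (hβ : β ∈ BCn n) : reflRoot α β ∈ BCn n := by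
  rcases mem_BCn_iff.1 hβ with hβ | ⟨a, ha, b, hb, hab, rfl⟩ | ⟨a, ha, rfl⟩
  · exact .inl (.inl (reflRoot_mem_shortBC hα hβ))
  · rw [reflRoot_add]
    exact add_mem_BCn (reflRoot_mem_shortBC hα ha) (reflRoot_mem_shortBC hα hb)
      (by rw [inner_reflRoot_reflRoot, hab])
  · exact mem_BCn_iff.2 (.inr (.inr ⟨_, reflRoot_mem_shortBC hα ha, reflRoot_smul α 2 a⟩))

end RootsBC

section ParitySubgroup

variable {n : ℕ} {J : Set (Fin n)} {a b : E n}

/-- The linear functional summing the coordinates outside `J`, encoded as the inner product with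
the indicator vector of `Jᶜ`. -/
def outsideSum (J : Set (Fin n)) : E n →ₗ[ℝ] ℝ := innerₛₗ ℝ (WithLp.toLp 2 (Jᶜ.indicator 1))

/-- The group `L_J` of vectors whose coordinates outside `J` have even integer sum; it cuts out
`A_J` inside `BC_n`. -/
def paritySubgroup (J : Set (Fin n)) : AddSubgroup (E n) :=
  (AddSubgroup.zmultiples (2 : ℝ)).comap (outsideSum J).toAddMonoidHom

lemma outsideSum_eps (i : Fin n) : outsideSum J (eps i) = Jᶜ.indicator 1 i := by
  simp [outsideSum, eps, EuclideanSpace.inner_single_right]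

lemma mem_paritySubgroup_iff_even {v : E n} {m : ℤ} (h : outsideSum J v = m) :
    v ∈ paritySubgroup J ↔ Even m := by
  change outsideSum J v ∈ AddSubgroup.zmultiples (2 : ℝ) ↔ _
  rw [h, AddSubgroup.mem_zmultiples_iff, even_iff_exists_two_mul]
  refine exists_congr fun k => ?_
  rw [zsmul_eq_mul, eq_comm, mul_comm]
  norm_cast

lemma eps_mem_paritySubgroup_iff {i : Fin n} : eps i ∈ paritySubgroup J ↔ i ∈ J := by
  by_cases hi : i ∈ J
  · simp [mem_paritySubgroup_iff_even (J := J) (v := eps i) (m := 0) (by simp [outsideSum_eps, hi]),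
      hi]
  · simp [mem_paritySubgroup_iff_even (J := J) (v := eps i) (m := 1) (by simp [outsideSum_eps, hi]),
      hi]

lemma smul_eps_mem_paritySubgroup_iff {i : Fin n} {c : ℝ} (hc : c = 1 ∨ c = -1) :
    c • eps i ∈ paritySubgroup J ↔ i ∈ J := by
  rcases hc with rfl | rfl <;> simp [eps_mem_paritySubgroup_iff]

lemma exists_int_outsideSum (J : Set (Fin n)) (ha : a ∈ shortBC n) :
    ∃ m : ℤ, outsideSum J a = m := by
  have exists_int_eps (i : Fin n) : ∃ m : ℤ, outsideSum J (eps i) = m := by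
    by_cases hi : i ∈ J
    exacts [⟨0, by simp [outsideSum_eps, hi]⟩, ⟨1, by simp [outsideSum_eps, hi]⟩]
  obtain ⟨i, rfl | rfl⟩ := ha
  · exact exists_int_eps i
  · obtain ⟨m, hm⟩ := exists_int_eps i
    exact ⟨-m, by rw [map_neg, hm, Int.cast_neg]⟩

lemma add_mem_paritySubgroup_iff (ha : a ∈ shortBC n) (hb : b ∈ shortBC n) :
    a + b ∈ paritySubgroup J ↔ (a ∈ paritySubgroup J ↔ b ∈ paritySubgroup J) := by
  obtain ⟨k, hk⟩ := exists_int_outsideSum J ha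
  obtain ⟨l, hl⟩ := exists_int_outsideSum J hb
  have hkl : outsideSum J (a + b) = (k + l : ℤ) := by rw [map_add, hk, hl, Int.cast_add]
  rw [mem_paritySubgroup_iff_even hk, mem_paritySubgroup_iff_even hl,
    mem_paritySubgroup_iff_even hkl, Int.even_add]

lemma two_smul_mem_paritySubgroup (ha : a ∈ shortBC n) : (2 : ℝ) • a ∈ paritySubgroup J := by
  rw [two_smul, add_mem_paritySubgroup_iff ha ha]

lemma inner_eq_zero_of_notMem_of_mem (ha : a ∈ shortBC n) (hb : b ∈ shortBC n)
    (haJ : a ∉ paritySubgroup J) (hbJ : b ∈ paritySubgroup J) : ⟪a, b⟫ = 0 := by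
  rcases eq_or_eq_neg_or_inner_eq_zero ha hb with rfl | rfl | h
  exacts [absurd hbJ haJ, absurd (neg_mem hbJ) haJ, h]

theorem AJ_eq_inter_paritySubgroup (J : Set (Fin n)) : AJ n J = BCn n ∩ paritySubgroup J := by
  have add_mem_iff {r s : Fin n} {c d : ℝ} (hc : c = 1 ∨ c = -1) (hd : d = 1 ∨ d = -1) :
      c • eps r + d • eps s ∈ paritySubgroup J ↔ (r ∈ J ↔ s ∈ J) := by
    rw [add_mem_paritySubgroup_iff (mem_shortBC_iff.2 ⟨r, c, hc, rfl⟩)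
      (mem_shortBC_iff.2 ⟨s, d, hd, rfl⟩), smul_eps_mem_paritySubgroup_iff hc,
      smul_eps_mem_paritySubgroup_iff hd]
  ext v
  constructor
  · rintro ((hv | ⟨j, hj, hv⟩) | ⟨r, s, hrs, hJ, c, d, hc, hd, rfl⟩)
    · obtain ⟨a, ha, rfl⟩ := mem_divBC_iff.1 hv
      exact ⟨.inr hv, two_smul_mem_paritySubgroup ha⟩
    · have hjJ : eps j ∈ paritySubgroup J := eps_mem_paritySubgroup_iff.2 hj
      refine ⟨.inl (.inl ⟨j, hv⟩), ?_⟩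
      rcases hv with rfl | rfl
      exacts [hjJ, neg_mem hjJ]
    · exact ⟨.inl (.inr ⟨r, s, hrs, c, d, hc, hd, rfl⟩),
        (add_mem_iff hc hd).2 (iff_iff_and_or_not_and_not.2 hJ)⟩
  · rintro ⟨(⟨j, hv⟩ | ⟨r, s, hrs, c, d, hc, hd, rfl⟩) | hv, hvJ⟩
    · refine .inl (.inr ⟨j, eps_mem_paritySubgroup_iff.1 ?_, hv⟩)
      rcases hv with rfl | rfl
      exacts [hvJ, neg_mem_iff.1 hvJ]
    · exact .inr ⟨r, s, hrs, iff_iff_and_or_not_and_not.1 ((add_mem_iff hc hd).1 hvJ),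
        c, d, hc, hd, rfl⟩
    · exact .inl (.inl hv)

end ParitySubgroup

section RealRoots

variable {n : ℕ} {Y : Type*} {Λ : E n → Set Y}

/-- The lift of `A_J`, cut out of the real roots by `L_J`. -/
def liftAJ (Λ : E n → Set Y) (J : Set (Fin n)) : Set (E n × Y) :=
  {x | x ∈ PhiRe (BCn n) Λ ∧ x.1 ∈ paritySubgroup J}

lemma setOf_mem_AJ_eq_liftAJ (Λ : E n → Set Y) (J : Set (Fin n)) :
    {x | x ∈ PhiRe (BCn n) Λ ∧ x.1 ∈ AJ n J} = liftAJ Λ J := by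
  ext x
  rw [AJ_eq_inter_paritySubgroup]
  exact and_congr_right fun hx => and_iff_right hx.1

lemma fst_ne_zero_of_mem_PhiRe {x : E n × Y} (hx : x ∈ PhiRe (BCn n) Λ) : x.1 ≠ 0 :=
  fun h => zero_notMem_BCn (h ▸ hx.1)

end RealRoots

section Maximality

variable {n : ℕ} {J : Set (Fin n)} {Λ : E n → Set Y} {Ψ : Set (E n × Y)} {u v w : E n} {y z : Y}

lemma isClosedSubSys_liftAJ (hΛ : IsExtensionDatum (BCn n) Λ) (hJ : J.Nonempty)
    (hJ' : J ≠ Set.univ) : IsClosedSubSys (PhiRe (BCn n) Λ) (liftAJ Λ J) := by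
  obtain ⟨j, hj⟩ := hJ
  obtain ⟨i, hi⟩ := (Set.ne_univ_iff_exists_notMem J).1 hJ'
  exact hΛ.isClosedSubSys_inter_addSubgroup (fun _ hα _ hβ => reflRoot_mem_BCn hα hβ)
    (fun _ hα _ hβ => exists_int_pairing hα hβ) (paritySubgroup J)
    ⟨eps j, shortBC_subset_ndSet ⟨j, .inl rfl⟩, eps_mem_paritySubgroup_iff.2 hj⟩
    ⟨eps i, shortBC_subset_ndSet ⟨i, .inl rfl⟩, mt eps_mem_paritySubgroup_iff.1 hi⟩

lemma short_mem_iff_add_mem (hΛ : IsExtensionDatum (BCn n) Λ)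
    (hΨ : IsClosedSubSys (PhiRe (BCn n) Λ) Ψ) (hle : liftAJ Λ J ⊆ Ψ)
    (hu : u ∈ shortBC n) (huJ : u ∉ paritySubgroup J)
    (hw : w ∈ shortBC n) (hwJ : w ∈ paritySubgroup J)
    (hy : (u, y) ∈ PhiRe (BCn n) Λ) (hz : (u + w, z) ∈ PhiRe (BCn n) Λ) :
    (u, y) ∈ Ψ ↔ (u + w, z) ∈ Ψ := by
  have huw : ⟪u, w⟫ = 0 := inner_eq_zero_of_notMem_of_mem hu hw huJ hwJ
  have hdiff : y - z ∈ Λ (u - (u + w)) :=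
    hΛ.sub_mem_of_pairing_eq_one (pairing_add_eq_one hu hw huw) hy hz
  refine hΨ.mem_iff_of_sub_mem (fun _ => fst_ne_zero_of_mem_PhiRe) hy hz (hle ?_)
  rw [sub_add_cancel_left] at hdiff
  rw [Prod.mk_sub_mk, sub_add_cancel_left]
  exact ⟨⟨.inl (.inl (neg_mem_shortBC hw)), hdiff⟩, neg_mem hwJ⟩

lemma short_mem_iff_zero_lift_mem (hΛ : IsExtensionDatum (BCn n) Λ)
    (hΨ : IsClosedSubSys (PhiRe (BCn n) Λ) Ψ) (hle : liftAJ Λ J ⊆ Ψ) (hJ : J.Nonempty)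
    (hu : u ∈ shortBC n) (huJ : u ∉ paritySubgroup J) (hy : (u, y) ∈ PhiRe (BCn n) Λ) :
    (u, y) ∈ Ψ ↔ (u, 0) ∈ Ψ := by
  obtain ⟨j, hj⟩ := hJ
  have hw : eps j ∈ shortBC n := ⟨j, .inl rfl⟩
  have hwJ : eps j ∈ paritySubgroup J := eps_mem_paritySubgroup_iff.2 hj
  have huw : (u + eps j, (0 : Y)) ∈ PhiRe (BCn n) Λ :=
    hΛ.zero_lift_mem (add_mem_ndSet hu hw (inner_eq_zero_of_notMem_of_mem hu hw huJ hwJ))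
  have hu₀ : (u, (0 : Y)) ∈ PhiRe (BCn n) Λ := hΛ.zero_lift_mem (shortBC_subset_ndSet hu)
  exact (short_mem_iff_add_mem hΛ hΨ hle hu huJ hw hwJ hy huw).trans
    (short_mem_iff_add_mem hΛ hΨ hle hu huJ hw hwJ hu₀ huw).symm

lemma zero_lift_mem_iff_zero_lift_mem (hΛ : IsExtensionDatum (BCn n) Λ)
    (hΨ : IsClosedSubSys (PhiRe (BCn n) Λ) Ψ) (hle : liftAJ Λ J ⊆ Ψ)
    (hu : u ∈ shortBC n) (huJ : u ∉ paritySubgroup J)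
    (hv : v ∈ shortBC n) (hvJ : v ∉ paritySubgroup J) :
    (u, (0 : Y)) ∈ Ψ ↔ (v, 0) ∈ Ψ := by
  rcases eq_or_eq_neg_or_inner_eq_zero hu hv with rfl | rfl | huv
  · rfl
  · simpa only [Prod.neg_mk, neg_zero] using
      hΨ.neg_mem_iff (x := (v, 0)) fun _ => fst_ne_zero_of_mem_PhiRe
  · have huv' : u + -v ∈ ndSet (BCn n) :=
      add_mem_ndSet hu (neg_mem_shortBC hv) (by rw [inner_neg_right, huv, neg_zero])
    have huvJ : u + -v ∈ paritySubgroup J := by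
      rw [add_mem_paritySubgroup_iff hu (neg_mem_shortBC hv), neg_mem_iff]
      exact iff_of_false huJ hvJ
    refine hΨ.mem_iff_of_sub_mem (fun _ => fst_ne_zero_of_mem_PhiRe)
      (hΛ.zero_lift_mem (shortBC_subset_ndSet hu)) (hΛ.zero_lift_mem (shortBC_subset_ndSet hv))
      (hle ?_)
    rw [Prod.mk_sub_mk, sub_zero, sub_eq_add_neg]
    exact ⟨hΛ.zero_lift_mem huv', huvJ⟩

theorem mem_iff_zero_lift_mem_of_notMem_liftAJ (hΛ : IsExtensionDatum (BCn n) Λ)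
    (hΨ : IsClosedSubSys (PhiRe (BCn n) Λ) Ψ) (hle : liftAJ Λ J ⊆ Ψ) (hJ : J.Nonempty)
    (hv : v ∈ shortBC n) (hvJ : v ∉ paritySubgroup J) {x : E n × Y}
    (hx : x ∈ PhiRe (BCn n) Λ) (hxJ : x ∉ liftAJ Λ J) : x ∈ Ψ ↔ (v, 0) ∈ Ψ := by
  obtain ⟨α, z⟩ := x
  have hαJ : α ∉ paritySubgroup J := fun h => hxJ ⟨hx, h⟩
  have short_case {u : E n} {y : Y} (hu : u ∈ shortBC n) (huJ : u ∉ paritySubgroup J)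
      (hy : (u, y) ∈ PhiRe (BCn n) Λ) : (u, y) ∈ Ψ ↔ (v, 0) ∈ Ψ :=
    (short_mem_iff_zero_lift_mem hΛ hΨ hle hJ hu huJ hy).trans
      (zero_lift_mem_iff_zero_lift_mem hΛ hΨ hle hu huJ hv hvJ)
  have mixed_case {u w : E n} (hu : u ∈ shortBC n) (huJ : u ∉ paritySubgroup J)
      (hw : w ∈ shortBC n) (hwJ : w ∈ paritySubgroup J)
      (hz : (u + w, z) ∈ PhiRe (BCn n) Λ) : (u + w, z) ∈ Ψ ↔ (v, 0) ∈ Ψ := by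
    have hu₀ : (u, (0 : Y)) ∈ PhiRe (BCn n) Λ := hΛ.zero_lift_mem (shortBC_subset_ndSet hu)
    exact (short_mem_iff_add_mem hΛ hΨ hle hu huJ hw hwJ hu₀ hz).symm.trans
      (short_case hu huJ hu₀)
  rcases mem_BCn_iff.1 hx.1 with hα | ⟨a, ha, b, hb, -, rfl : α = a + b⟩ | ⟨a, ha, rfl : α = _⟩
  · exact short_case hα hαJ hx
  · rw [add_mem_paritySubgroup_iff ha hb] at hαJ
    by_cases haJ : a ∈ paritySubgroup J
    · have hbJ : b ∉ paritySubgroup J := fun h => hαJ (iff_of_true haJ h)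
      rw [add_comm a b] at hx ⊢
      exact mixed_case hb hbJ ha haJ hx
    · have hbJ : b ∈ paritySubgroup J := by_contra fun h => hαJ (iff_of_false haJ h)
      exact mixed_case ha haJ hb hbJ hx
  · exact absurd (two_smul_mem_paritySubgroup ha) hαJ

end Maximality

theorem statement17_general {Y : Type*} [AddCommGroup Y] [Module ℝ Y] {n : ℕ} {Λ : E n → Set Y}
    (hΛ : IsExtensionDatum (BCn n) Λ) {J : Set (Fin n)} (hJ : J.Nonempty) (hJ' : J ≠ Set.univ) :
    IsMaxClosedSubSys (PhiRe (BCn n) Λ) {x | x ∈ PhiRe (BCn n) Λ ∧ x.1 ∈ AJ n J} := by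
  rw [setOf_mem_AJ_eq_liftAJ]
  obtain ⟨i, hi⟩ := (Set.ne_univ_iff_exists_notMem J).1 hJ'
  exact isMaxClosedSubSys_of_mem_iff (isClosedSubSys_liftAJ hΛ hJ hJ') (eps i, 0)
    fun Ψ hΨ hle x hx hxJ => mem_iff_zero_lift_mem_of_notMem_liftAJ hΛ hΨ hle hJ
      ⟨i, .inl rfl⟩ (mt eps_mem_paritySubgroup_iff.1 hi) hx hxJ

/-- Proposition 7.2: the lift `Â_J` is a maximal closed subroot system for every
nonempty proper `J`. -/
theorem statement17 {Y : Type*} [AddCommGroup Y] [Module ℝ Y] [FiniteDimensional ℝ Y]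
    {n : ℕ} (hn : 2 ≤ n) (Λ : E n → Set Y) (Λs Λl Λd : Set Y)
    (hED : IsExtensionDatum (BCn n) Λ)
    (hs : ∀ α ∈ shortBC n, Λ α = Λs) (hl : ∀ α ∈ longBC n, Λ α = Λl)
    (hd : ∀ α ∈ divBC n, Λ α = Λd) (hls : Λl ⊆ Λs)
    (J : Set (Fin n)) (hJ : J.Nonempty) (hJ' : J ≠ Set.univ) :
    IsMaxClosedSubSys (PhiRe (BCn n) Λ)
      {x | x ∈ PhiRe (BCn n) Λ ∧ x.1 ∈ AJ n J} :=
  statement17_general hED hJ hJ'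

end BdS
end
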